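/- For every B ≠ 0, d > 0 and b ∈ (0,d), the function z ↦ ξ_B(b,z) is differentiable on each connected component of ℝ ∖ Σ_B with derivative dξ_B/dz = (1/(4πd|B|)) Σ_{n=1}^∞ ψ'((|B| − z + (πn/d)²)/(2|B|))·sin²(πnb/d), where ψ' is the trigamma function; this derivative is strictly positive, so ξ_B(b,·) is strictly increasing on each connected component of ℝ ∖ Σ_B. -/

import Mathlib

open Real Filter Topology Asymptotics

/-- The digamma function `ψ = Γ'/Γ`. -/
noncomputable def digamma (x : ℝ) : ℝ := deriv Real.Gamma x / Real.Gamma x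

/-- The set of Landau–transverse levels
`Σ_B = {|B|(2m+1) + (πn/d)² : m ∈ ℤ_{≥0}, n ∈ ℤ_{≥1}}` of the free magnetic
Hamiltonian in a Dirichlet layer of width `d`. -/
def landauLevels (B d : ℝ) : Set ℝ :=
  {x | ∃ m n : ℕ, x = |B| * (2 * (m : ℝ) + 1) + (π * ((n : ℝ) + 1) / d) ^ 2}

/-- The `n`-th term (for `n+1`-st transverse mode) of the series defining the
magnetic regularized Green's function:
`t_n = ln((πn)²/(2|B|d²)) − ψ((|B| − z + (πn/d)²)/(2|B|))`. -/
noncomputable def magTerm (B d z : ℝ) (n : ℕ) : ℝ :=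
  Real.log ((π * ((n : ℝ) + 1)) ^ 2 / (2 * |B| * d ^ 2)) -
    digamma ((|B| - z + (π * ((n : ℝ) + 1) / d) ^ 2) / (2 * |B|))

/-- The magnetic regularized Green's function `ξ_B(b,z)` of a point interaction at
height `b ∈ (0,d)` in the Dirichlet layer of width `d` with homogeneous magnetic
field of strength `B`. -/
noncomputable def xiB (B d b z : ℝ) : ℝ :=
  (1 / (2 * π * d)) * ∑' n : ℕ, magTerm B d z n * Real.sin (π * ((n : ℝ) + 1) * b / d) ^ 2
    + (1 / (4 * π * d)) *
      (Real.eulerMascheroniConstant + digamma (b / d) + (π / 2) * Real.cot (π * b / d))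

/-- The trigamma function `ψ' = dψ/dx`. -/
noncomputable def trigamma (x : ℝ) : ℝ := deriv digamma x

/-!
Up to affine changes of `z` and of the value, the function `ξ_B(b, ·)` is a series
`∑ (log aₙ - ψ(aₙ - t)) wₙ` with weights `wₙ = sin²(…) ≥ 0` and with `aₙ` growing quadratically.

Off its poles `ψ' > 0`: the recursion gives `ψ'(x) = ψ'(x + n) + ∑ k < n, 1/(x + k)²`, and `ψ' ≥ 0`
on the positive axis because `log ∘ Γ` is convex there. Moreover `ψ(x)` is the limit of the concave
functions `log (x + n) - ∑ k < n, 1/(x + k)`, so it is concave on the positive axis, whence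
`ψ'(x) ≤ ψ(x) - ψ(x - 1) = 1/(x - 1)`. This dominates the termwise derivatives by `∑ 1/aₙ` for all
but the finitely many `n` for which `aₙ - t` is not yet large, and these few terms are split off.
-/

lemma ne_neg_natCast_of_pos {x : ℝ} (hx : 0 < x) (m : ℕ) : x ≠ -m := by
  linarith [m.cast_nonneg (α := ℝ)]

lemma add_natCast_ne_neg_natCast {x : ℝ} (hx : ∀ m : ℕ, x ≠ -m) (n m : ℕ) : x + n ≠ -m :=
  fun h => hx (m + n) (by push_cast; linarith)

lemma analyticAt_Gamma {x : ℝ} (hx : ∀ m : ℕ, x ≠ -m) : AnalyticAt ℝ Gamma x := by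
  have hC : AnalyticAt ℂ Complex.Gamma x := by
    have hinv := (Complex.differentiable_one_div_Gamma.analyticAt (x : ℂ)).inv
      (inv_ne_zero (Complex.Gamma_ne_zero fun m => by exact_mod_cast hx m))
    exact hinv.congr (.of_forall fun s => by simp)
  exact hC.re_ofReal.congr (.of_forall fun y => by simp [Complex.Gamma_ofReal])

lemma hasDerivAt_digamma {x : ℝ} (hx : ∀ m : ℕ, x ≠ -m) : HasDerivAt digamma (trigamma x) x :=
  have hΓ := analyticAt_Gamma hx
  (hΓ.deriv.div hΓ (Gamma_ne_zero hx)).differentiableAt.hasDerivAt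

lemma digamma_add_one {x : ℝ} (hx : ∀ m : ℕ, x ≠ -m) : digamma (x + 1) = digamma x + x⁻¹ := by
  have hx0 : x ≠ 0 := by simpa using hx 0
  have hrec : (fun y => Gamma (y + 1)) =ᶠ[𝓝 x] fun y => y * Gamma y :=
    (eventually_ne_nhds hx0).mono fun y hy => Gamma_add_one hy
  have hderiv : deriv Gamma (x + 1) = Gamma x + x * deriv Gamma x := by
    rw [← deriv_comp_add_const, hrec.deriv_eq,
      deriv_fun_mul differentiableAt_fun_id (differentiableAt_Gamma hx)]
    simp
  have hΓ := Gamma_ne_zero hx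
  rw [digamma, digamma, hderiv, Gamma_add_one hx0]
  field_simp
  ring

lemma trigamma_add_one {x : ℝ} (hx : ∀ m : ℕ, x ≠ -m) :
    trigamma (x + 1) = trigamma x - (x ^ 2)⁻¹ := by
  have hx0 : x ≠ 0 := by simpa using hx 0
  have hnear : ∀ᶠ y : ℝ in 𝓝 x, ∀ m : ℕ, y ≠ -m := by
    filter_upwards [(analyticAt_Gamma hx).continuousAt.eventually_ne (Gamma_ne_zero hx)]
      with y hy m hm
    exact hy ((Gamma_eq_zero_iff y).2 ⟨m, hm⟩)
  have hshift : HasDerivAt (fun y => digamma (y + 1)) (trigamma (x + 1)) x :=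
    (hasDerivAt_digamma (by simpa using add_natCast_ne_neg_natCast hx 1)).comp_add_const x 1
  have hsum : HasDerivAt (fun y => digamma (y + 1)) (trigamma x - (x ^ 2)⁻¹) x :=
    ((hasDerivAt_digamma hx).add (hasDerivAt_inv hx0)).congr_of_eventuallyEq
      (hnear.mono fun y hy => digamma_add_one hy)
  exact hshift.unique hsum

lemma hasDerivAt_log_Gamma {x : ℝ} (hx : 0 < x) : HasDerivAt (log ∘ Gamma) (digamma x) x :=
  (differentiableAt_Gamma (ne_neg_natCast_of_pos hx)).hasDerivAt.log (Gamma_pos_of_pos hx).ne'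

lemma monotoneOn_digamma : MonotoneOn digamma (Set.Ioi 0) :=
  (convexOn_log_Gamma.monotoneOn_deriv fun _ hx =>
    (hasDerivAt_log_Gamma hx).differentiableAt).congr fun _ hx => (hasDerivAt_log_Gamma hx).deriv

lemma slope_log_Gamma_add_one {x : ℝ} (hx : 0 < x) :
    slope (log ∘ Gamma) x (x + 1) = log x := by
  rw [slope_def_field, Function.comp_apply, Function.comp_apply, Gamma_add_one hx.ne',
    log_mul hx.ne' (Gamma_pos_of_pos hx).ne']
  ring

lemma digamma_le_log {x : ℝ} (hx : 0 < x) : digamma x ≤ log x :=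
  slope_log_Gamma_add_one hx ▸ convexOn_log_Gamma.le_slope_of_hasDerivAt hx
    (by positivity : 0 < x + 1) (lt_add_one x) (hasDerivAt_log_Gamma hx)

lemma log_sub_inv_le_digamma {x : ℝ} (hx : 0 < x) : log x - x⁻¹ ≤ digamma x := by
  have hx1 : 0 < x + 1 := by positivity
  have hslope := convexOn_log_Gamma.slope_le_of_hasDerivAt hx hx1 (lt_add_one x)
    (hasDerivAt_log_Gamma hx1)
  rw [slope_log_Gamma_add_one hx, digamma_add_one (ne_neg_natCast_of_pos hx)] at hslope
  linarith

lemma isBigO_log_sub_digamma : (fun x => log x - digamma x) =O[atTop] fun x => x⁻¹ := by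
  refine .of_bound 1 ?_
  filter_upwards [eventually_gt_atTop 0] with x hx
  rw [norm_of_nonneg (sub_nonneg.2 (digamma_le_log hx)), norm_of_nonneg (by positivity)]
  linarith [log_sub_inv_le_digamma hx]

lemma digamma_add_natCast {x : ℝ} (hx : ∀ m : ℕ, x ≠ -m) (n : ℕ) :
    digamma (x + n) = digamma x + ∑ k ∈ Finset.range n, (x + k)⁻¹ := by
  induction n with
  | zero => simp
  | succ n ih =>
    rw [Finset.sum_range_succ, Nat.cast_succ, ← add_assoc,
      digamma_add_one (add_natCast_ne_neg_natCast hx n), ih, add_assoc]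

lemma tendsto_log_add_sub_sum_inv {x : ℝ} (hx : ∀ m : ℕ, x ≠ -m) :
    Tendsto (fun n : ℕ => log (x + n) - ∑ k ∈ Finset.range n, (x + k)⁻¹) atTop
      (𝓝 (digamma x)) := by
  have hlim := (isBigO_log_sub_digamma.trans_tendsto tendsto_inv_atTop_zero).comp
    (tendsto_atTop_add_const_left atTop x tendsto_natCast_atTop_atTop)
  refine ((hlim.const_add (digamma x)).congr fun n => ?_).trans_eq (by rw [add_zero])
  rw [Function.comp_apply, digamma_add_natCast hx]
  ring

lemma concaveOn_log_add_sub_sum_inv (n : ℕ) :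
    ConcaveOn ℝ (Set.Ioi 0) fun x => log (x + n) - ∑ k ∈ Finset.range n, (x + k)⁻¹ := by
  have hshift (k : ℕ) : Set.Ioi (0 : ℝ) ⊆ (fun x => (k : ℝ) + x) ⁻¹' Set.Ioi 0 :=
    fun x (hx : 0 < x) => add_pos_of_nonneg_of_pos k.cast_nonneg hx
  have hinv (k : ℕ) : ConvexOn ℝ (Set.Ioi 0) fun x : ℝ => (x + k)⁻¹ := by
    simpa [Function.comp_def] using
      ((convexOn_zpow (-1)).translate_left (k : ℝ)).subset (hshift k) (convex_Ioi 0)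
  have hsum : ConvexOn ℝ (Set.Ioi 0) fun x : ℝ => ∑ k ∈ Finset.range n, (x + k)⁻¹ := by
    induction n with
    | zero => simpa using convexOn_const 0 (convex_Ioi 0)
    | succ n ih =>
      simp only [Finset.sum_range_succ]
      exact ih.add (hinv n)
  have hlog : ConcaveOn ℝ (Set.Ioi 0) fun x => log (x + n) :=
    (strictConcaveOn_log_Ioi.concaveOn.translate_left n).subset (hshift n) (convex_Ioi 0)
  exact hlog.sub hsum

lemma concaveOn_digamma : ConcaveOn ℝ (Set.Ioi 0) digamma := by
  have hlim {x : ℝ} (hx : x ∈ Set.Ioi 0) := tendsto_log_add_sub_sum_inv (ne_neg_natCast_of_pos hx)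
  refine ⟨convex_Ioi 0, fun x hx y hy α β hα hβ hαβ => ?_⟩
  exact le_of_tendsto_of_tendsto' (((hlim hx).const_smul α).add ((hlim hy).const_smul β))
    (hlim (convex_Ioi 0 hx hy hα hβ hαβ))
    fun n => (concaveOn_log_add_sub_sum_inv n).2 hx hy hα hβ hαβ

lemma trigamma_nonneg_of_pos {x : ℝ} (hx : 0 < x) : 0 ≤ trigamma x := by
  rw [trigamma, ← derivWithin_of_isOpen isOpen_Ioi hx]
  exact monotoneOn_digamma.derivWithin_nonneg

lemma trigamma_add_natCast {x : ℝ} (hx : ∀ m : ℕ, x ≠ -m) (n : ℕ) :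
    trigamma (x + n) = trigamma x - ∑ k ∈ Finset.range n, ((x + k) ^ 2)⁻¹ := by
  induction n with
  | zero => simp
  | succ n ih =>
    rw [Finset.sum_range_succ, Nat.cast_succ, ← add_assoc,
      trigamma_add_one (add_natCast_ne_neg_natCast hx n), ih, sub_sub]

lemma trigamma_pos {x : ℝ} (hx : ∀ m : ℕ, x ≠ -m) : 0 < trigamma x := by
  obtain ⟨n, hn⟩ := exists_nat_gt (-x)
  have hfar : 0 ≤ trigamma (x + (n + 1 : ℕ)) :=
    trigamma_nonneg_of_pos (by push_cast; linarith)
  have hsum : 0 < ∑ k ∈ Finset.range (n + 1), ((x + k) ^ 2)⁻¹ :=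
    Finset.sum_pos (fun k _ => by
      have : x + k ≠ 0 := by simpa using add_natCast_ne_neg_natCast hx k 0
      positivity) Finset.nonempty_range_add_one
  linarith [trigamma_add_natCast hx (n + 1)]

lemma trigamma_le_inv_sub_one {x : ℝ} (hx : 1 < x) : trigamma x ≤ (x - 1)⁻¹ := by
  have hx0 : 0 < x - 1 := sub_pos.2 hx
  have hx' : 0 < x := one_pos.trans hx
  have hslope := concaveOn_digamma.le_slope_of_hasDerivAt hx0 hx' (sub_one_lt x)
    (hasDerivAt_digamma (ne_neg_natCast_of_pos hx'))
  have hrec := digamma_add_one (ne_neg_natCast_of_pos hx0)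
  rw [sub_add_cancel] at hrec
  rwa [slope_def_field, hrec, sub_sub_cancel, div_one, add_sub_cancel_left] at hslope

lemma isBigO_trigamma : trigamma =O[atTop] fun x => x⁻¹ := by
  refine .of_bound 2 ?_
  filter_upwards [eventually_ge_atTop 2] with x hx
  have hx0 : 0 < x := by linarith
  rw [norm_of_nonneg (trigamma_nonneg_of_pos hx0), norm_of_nonneg (by positivity)]
  calc trigamma x ≤ (x - 1)⁻¹ := trigamma_le_inv_sub_one (by linarith)
    _ ≤ (x / 2)⁻¹ := by gcongr; linarith
    _ = 2 * x⁻¹ := by rw [inv_div, div_eq_mul_inv]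

lemma isEquivalent_sub_of_tendsto {α : Type*} {l : Filter α} {f c : α → ℝ} {t : ℝ}
    (hf : Tendsto f l atTop) (hc : Tendsto c l (𝓝 t)) : (fun x => f x - c x) ~[l] f :=
  IsEquivalent.refl.sub_isLittleO <| (hc.isBigO_one ℝ).trans_isLittleO <|
    isLittleO_const_left.2 <| .inr <| tendsto_norm_atTop_atTop.comp hf

lemma isBigO_log_sub_log_sub (t : ℝ) :
    (fun x => log x - log (x - t)) =O[atTop] fun x => x⁻¹ := by
  have hlog : log =O[𝓝 1] fun u => u - 1 := by
    simpa using (hasDerivAt_log one_ne_zero).isBigO_sub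
  have hlim : Tendsto (fun x : ℝ => (x - t) / x) atTop (𝓝 1) :=
    (isEquivalent_iff_tendsto_one (eventually_ne_atTop 0)).1
      (isEquivalent_sub_of_tendsto tendsto_id tendsto_const_nhds)
  have hratio : (fun x : ℝ => (x - t) / x - 1) =O[atTop] fun x => x⁻¹ := by
    refine (isBigO_const_mul_self (-t) _ _).congr' ?_ .rfl
    filter_upwards [eventually_ne_atTop 0] with x hx
    field_simp
    ring
  refine ((hlog.comp_tendsto hlim).trans hratio).neg_left.congr' ?_ .rfl
  filter_upwards [eventually_gt_atTop 0, eventually_gt_atTop t] with x hx hxt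
  rw [Function.comp_apply, log_div (sub_pos.2 hxt).ne' hx.ne', neg_sub]

lemma isBigO_log_sub_digamma_sub (t : ℝ) :
    (fun x => log x - digamma (x - t)) =O[atTop] fun x => x⁻¹ := by
  have hequiv : (fun x : ℝ => x - t) ~[atTop] id :=
    isEquivalent_sub_of_tendsto tendsto_id tendsto_const_nhds
  have hshift : (fun x => log (x - t) - digamma (x - t)) =O[atTop] fun x => x⁻¹ :=
    (isBigO_log_sub_digamma.comp_tendsto (hequiv.symm.tendsto_atTop tendsto_id)).trans
      hequiv.inv.isBigO
  exact ((isBigO_log_sub_log_sub t).add hshift).congr_left fun x => sub_add_sub_cancel _ _ _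

lemma hasDerivAt_tsum_of_eventually {ι 𝕜 F : Type*} [RCLike 𝕜] [NormedAddCommGroup F]
    [NormedSpace 𝕜 F] [CompleteSpace F] {u : ι → ℝ} {g g' : ι → 𝕜 → F} {y : 𝕜} (hu : Summable u)
    (hg : ∀ i, HasDerivAt (g i) (g' i y) y)
    (hg' : ∀ᶠ p : ι × 𝕜 in cofinite ×ˢ 𝓝 y,
      HasDerivAt (g p.1) (g' p.1 p.2) p.2 ∧ ‖g' p.1 p.2‖ ≤ u p.1)
    (hgy : Summable fun i => g i y) :
    HasDerivAt (fun z => ∑' i, g i z) (∑' i, g' i y) y := by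
  obtain ⟨P, hP, Q, hQ, hPQ⟩ := eventually_prod_iff.1 hg'
  obtain ⟨ε, hε, hball⟩ := Metric.eventually_nhds_iff_ball.1 hQ
  let s : Finset ι := (eventually_cofinite.1 hP).toFinset
  have hs (i : {i // i ∉ s}) : P i := by simpa [s] using i.2
  have hy : y ∈ Metric.ball y ε := Metric.mem_ball_self hε
  have hderiv (i : {i // i ∉ s}) (z) (hz : z ∈ Metric.ball y ε) := (hPQ (hs i) (hball z hz)).1
  have hbound (i : {i // i ∉ s}) (z) (hz : z ∈ Metric.ball y ε) := (hPQ (hs i) (hball z hz)).2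
  have hus : Summable fun i : {i // i ∉ s} => u i := hu.subtype _
  have hgs : Summable fun i : {i // i ∉ s} => g i y := s.summable_compl_iff.2 hgy
  have hg's : Summable fun i => g' i y :=
    s.summable_compl_iff.1 (.of_norm_bounded hus fun i => hbound i y hy)
  have hsplit : (fun z => ∑' i, g i z) =ᶠ[𝓝 y]
      fun z => ∑ i ∈ s, g i z + ∑' i : {i // i ∉ s}, g i z := by
    filter_upwards [Metric.ball_mem_nhds y hε] with z hz
    have hgz := summable_of_summable_hasDerivAt_of_isPreconnected hus Metric.isOpen_ball
      Metric.isPreconnected_ball hderiv hbound hy hgs hz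
    exact (s.summable_compl_iff.1 hgz).sum_add_tsum_compl.symm
  have htail := hasDerivAt_tsum_of_isPreconnected hus Metric.isOpen_ball
    Metric.isPreconnected_ball hderiv hbound hy hgs hy
  rw [← hg's.sum_add_tsum_compl (s := s)]
  exact ((HasDerivAt.fun_sum fun i _ => hg i).add htail).congr_of_eventuallyEq hsplit

section DigammaSeries

variable {ι : Type*} {a w : ι → ℝ}

lemma summable_log_sub_digamma_mul (ha : Tendsto a cofinite atTop)
    (hw : Summable fun i => w i / a i) (t : ℝ) :
    Summable fun i => (log (a i) - digamma (a i - t)) * w i := by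
  refine summable_of_isBigO hw ?_
  simpa only [div_eq_inv_mul, Function.comp_apply] using
    ((isBigO_log_sub_digamma_sub t).comp_tendsto ha).mul (isBigO_refl w cofinite)

lemma isBigO_trigamma_sub_mul (ha : Tendsto a cofinite atTop) (w : ι → ℝ) (t : ℝ) :
    (fun p : ι × ℝ => trigamma (a p.1 - p.2) * w p.1) =O[cofinite ×ˢ 𝓝 t]
      fun p => w p.1 / a p.1 := by
  have hequiv : (fun p : ι × ℝ => a p.1 - p.2) ~[cofinite ×ˢ 𝓝 t] fun p => a p.1 :=
    isEquivalent_sub_of_tendsto (ha.comp tendsto_fst) tendsto_snd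
  have htri : (fun p : ι × ℝ => trigamma (a p.1 - p.2)) =O[cofinite ×ˢ 𝓝 t] fun p => (a p.1)⁻¹ :=
    (isBigO_trigamma.comp_tendsto (hequiv.symm.tendsto_atTop (ha.comp tendsto_fst))).trans
      hequiv.inv.isBigO
  simpa only [div_eq_inv_mul] using htri.mul (isBigO_refl (fun p : ι × ℝ => w p.1) _)

lemma summable_trigamma_sub_mul (ha : Tendsto a cofinite atTop)
    (hw : Summable fun i => w i / a i) (t : ℝ) : Summable fun i => trigamma (a i - t) * w i :=
  summable_of_isBigO hw <| (isBigO_trigamma_sub_mul ha w t).comp_tendsto <|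
    tendsto_id.prodMk tendsto_const_nhds

lemma hasDerivAt_log_sub_digamma_sub_mul {x t : ℝ} (hx : ∀ m : ℕ, x - t ≠ -m) (c : ℝ) :
    HasDerivAt (fun t => (log x - digamma (x - t)) * c) (trigamma (x - t) * c) t := by
  simpa only [neg_neg] using
    (((hasDerivAt_digamma hx).comp_const_sub x t).const_sub (log x)).mul_const c

lemma hasDerivAt_tsum_log_sub_digamma_mul (ha : Tendsto a cofinite atTop)
    (hw : Summable fun i => w i / a i) {t : ℝ} (ht : ∀ (i : ι) (m : ℕ), a i - t ≠ -m) :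
    HasDerivAt (fun t => ∑' i, (log (a i) - digamma (a i - t)) * w i)
      (∑' i, trigamma (a i - t) * w i) t := by
  obtain ⟨C, hC⟩ := (isBigO_trigamma_sub_mul ha w t).bound
  have hpos : ∀ᶠ p : ι × ℝ in cofinite ×ˢ 𝓝 t, 0 < a p.1 - p.2 :=
    ((isEquivalent_sub_of_tendsto (ha.comp tendsto_fst) tendsto_snd).symm.tendsto_atTop
      (ha.comp tendsto_fst)).eventually_gt_atTop 0
  exact hasDerivAt_tsum_of_eventually (g := fun i t => (log (a i) - digamma (a i - t)) * w i)
    (g' := fun i t => trigamma (a i - t) * w i) (hw.norm.mul_left C)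
    (fun i => hasDerivAt_log_sub_digamma_sub_mul (ht i) (w i))
    ((hC.and hpos).mono fun p hp =>
      ⟨hasDerivAt_log_sub_digamma_sub_mul (ne_neg_natCast_of_pos hp.2) _, hp.1⟩)
    (summable_log_sub_digamma_mul ha hw t)

lemma tsum_trigamma_sub_mul_pos (ha : Tendsto a cofinite atTop)
    (hw : Summable fun i => w i / a i) {t : ℝ} (ht : ∀ (i : ι) (m : ℕ), a i - t ≠ -m)
    (hw0 : ∀ i, 0 ≤ w i) {j : ι} (hwj : 0 < w j) : 0 < ∑' i, trigamma (a i - t) * w i :=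
  (summable_trigamma_sub_mul ha hw t).tsum_pos
    (fun i => mul_nonneg (trigamma_pos (ht i)).le (hw0 i)) j (mul_pos (trigamma_pos (ht j)) hwj)

end DigammaSeries

/-- The energy `(π(n + 1)/d)²` of the transverse mode `n + 1`, in units of the Landau gap `2|B|`.
Writing `a n` for it, the series in `ξ_B` has the terms `log (a n) - ψ(a n - t)`, with `sin²`
weights and `t = (z - |B|)/(2|B|)`. -/
noncomputable def scaledTransverseLevel (B d : ℝ) (n : ℕ) : ℝ :=
  (π * ((n : ℝ) + 1)) ^ 2 / (2 * |B| * d ^ 2)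

/-- The derivative `dξ_B/dz` as a trigamma series; as in `xiB`, the index `n` stands for the
transverse mode `n + 1`. -/
noncomputable def xiBDeriv (B d b z : ℝ) : ℝ :=
  (1 / (4 * π * d * |B|)) * ∑' n : ℕ,
    trigamma ((|B| - z + (π * ((n : ℝ) + 1) / d) ^ 2) / (2 * |B|)) *
      Real.sin (π * ((n : ℝ) + 1) * b / d) ^ 2

section Layer

variable {B d : ℝ}

lemma digamma_arg_eq_scaledTransverseLevel_sub (B d z : ℝ) (n : ℕ) :
    (|B| - z + (π * ((n : ℝ) + 1) / d) ^ 2) / (2 * |B|) =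
      scaledTransverseLevel B d n - (z - |B|) / (2 * |B|) := by
  rw [scaledTransverseLevel]
  ring

lemma scaledTransverseLevel_sub_ne_neg_natCast (hB : B ≠ 0) {z : ℝ} (hz : z ∉ landauLevels B d)
    (n m : ℕ) : scaledTransverseLevel B d n - (z - |B|) / (2 * |B|) ≠ -m := by
  rw [← digamma_arg_eq_scaledTransverseLevel_sub, ne_eq, div_eq_iff (by positivity)]
  exact fun h => hz ⟨m, n, by linarith⟩

lemma summable_inv_scaledTransverseLevel (B d : ℝ) :
    Summable fun n => (scaledTransverseLevel B d n)⁻¹ := by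
  have hsq : Summable fun n : ℕ => (((n + 1 : ℕ) : ℝ) ^ 2)⁻¹ :=
    (summable_nat_add_iff 1).2 (Real.summable_nat_pow_inv.2 one_lt_two)
  refine (hsq.mul_left (2 * |B| * d ^ 2 / π ^ 2)).congr fun n => ?_
  rw [scaledTransverseLevel, inv_div, mul_pow, Nat.cast_succ]
  field_simp

lemma tendsto_scaledTransverseLevel (hB : B ≠ 0) (hd : d ≠ 0) :
    Tendsto (scaledTransverseLevel B d) cofinite atTop := by
  have hpos (n : ℕ) : 0 < scaledTransverseLevel B d n := by
    rw [scaledTransverseLevel]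
    positivity
  have hzero := (summable_inv_scaledTransverseLevel B d).tendsto_cofinite_zero
  exact (tendsto_nhdsWithin_iff.2
    ⟨hzero, .of_forall fun n => inv_pos.2 (hpos n)⟩).inv_tendsto_nhdsGT_zero.congr
      fun n => inv_inv _

lemma summable_sin_sq_div_scaledTransverseLevel (B d b : ℝ) :
    Summable fun n : ℕ => sin (π * ((n : ℝ) + 1) * b / d) ^ 2 / scaledTransverseLevel B d n := by
  have hnonneg (n : ℕ) : 0 ≤ scaledTransverseLevel B d n := by
    rw [scaledTransverseLevel]
    positivity
  refine .of_nonneg_of_le (fun n => div_nonneg (sq_nonneg _) (hnonneg n)) (fun n => ?_)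
    (summable_inv_scaledTransverseLevel B d)
  rw [← one_div]
  exact div_le_div_of_nonneg_right (sin_sq_le_one _) (hnonneg n)

lemma xiB_eq_tsum_log_sub_digamma_mul (B d b z : ℝ) :
    xiB B d b z =
      (1 / (2 * π * d)) * ∑' n : ℕ, (log (scaledTransverseLevel B d n) -
          digamma (scaledTransverseLevel B d n - (z - |B|) / (2 * |B|))) *
        sin (π * ((n : ℝ) + 1) * b / d) ^ 2 +
      (1 / (4 * π * d)) *
        (eulerMascheroniConstant + digamma (b / d) + (π / 2) * cot (π * b / d)) := by
  simp only [xiB, magTerm, digamma_arg_eq_scaledTransverseLevel_sub, scaledTransverseLevel]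

lemma hasDerivAt_xiB (hB : B ≠ 0) (hd : d ≠ 0) (b : ℝ) {z : ℝ} (hz : z ∉ landauLevels B d) :
    HasDerivAt (xiB B d b) (xiBDeriv B d b z) z := by
  have hseries := hasDerivAt_tsum_log_sub_digamma_mul (tendsto_scaledTransverseLevel hB hd)
    (summable_sin_sq_div_scaledTransverseLevel B d b)
    (scaledTransverseLevel_sub_ne_neg_natCast hB hz)
  have harg : HasDerivAt (fun z => (z - |B|) / (2 * |B|)) (1 / (2 * |B|)) z :=
    ((hasDerivAt_id z).sub_const |B|).div_const _
  rw [funext (xiB_eq_tsum_log_sub_digamma_mul B d b)]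
  refine (((hseries.comp z harg).const_mul (1 / (2 * π * d))).add_const _).congr_deriv ?_
  simp only [xiBDeriv, digamma_arg_eq_scaledTransverseLevel_sub]
  ring

lemma xiBDeriv_pos (hB : B ≠ 0) (hd : 0 < d) {b : ℝ} (hb : ∀ k : ℤ, b ≠ k * d) {z : ℝ}
    (hz : z ∉ landauLevels B d) : 0 < xiBDeriv B d b z := by
  have hsin : sin (π * (((0 : ℕ) : ℝ) + 1) * b / d) ≠ 0 := by
    rw [Nat.cast_zero, zero_add, mul_one, ne_eq, sin_eq_zero_iff, not_exists]
    intro k hk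
    rw [eq_div_iff hd.ne'] at hk
    exact hb k (mul_left_cancel₀ pi_ne_zero (by linarith))
  simp only [xiBDeriv, digamma_arg_eq_scaledTransverseLevel_sub]
  refine mul_pos (by positivity) ?_
  exact tsum_trigamma_sub_mul_pos (tendsto_scaledTransverseLevel hB hd.ne')
    (summable_sin_sq_div_scaledTransverseLevel B d b)
    (scaledTransverseLevel_sub_ne_neg_natCast hB hz) (fun _ => sq_nonneg _) (sq_pos_of_ne_zero hsin)

lemma strictMonoOn_xiB (hB : B ≠ 0) (hd : 0 < d) {b : ℝ} (hb : ∀ k : ℤ, b ≠ k * d) {S : Set ℝ}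
    (hS : S.OrdConnected) (hSB : S ⊆ (landauLevels B d)ᶜ) : StrictMonoOn (xiB B d b) S := by
  have hderiv {z : ℝ} (hz : z ∈ S) := hasDerivAt_xiB hB hd.ne' b (hSB hz)
  refine strictMonoOn_of_deriv_pos hS.convex
    (fun z hz => (hderiv hz).continuousAt.continuousWithinAt) fun z hz => ?_
  rw [(hderiv (interior_subset hz)).deriv]
  exact xiBDeriv_pos hB hd hb (hSB (interior_subset hz))

end Layer

theorem xiB_hasDerivAt_and_strictMono_general {B d b : ℝ} (hB : B ≠ 0) (hd : 0 < d)
    (hb : ∀ k : ℤ, b ≠ k * d) :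
    (∀ z ∉ landauLevels B d,
      HasDerivAt (xiB B d b) (xiBDeriv B d b z) z ∧ 0 < xiBDeriv B d b z) ∧
    ∀ S : Set ℝ, S.OrdConnected → S ⊆ (landauLevels B d)ᶜ → StrictMonoOn (xiB B d b) S :=
  ⟨fun _ hz => ⟨hasDerivAt_xiB hB hd.ne' b hz, xiBDeriv_pos hB hd hb hz⟩,
    fun _ hS hSB => strictMonoOn_xiB hB hd hb hS hSB⟩

lemma ne_intCast_mul_of_mem_Ioo {b d : ℝ} (hb : b ∈ Set.Ioo 0 d) (k : ℤ) : b ≠ k * d := by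
  rintro rfl
  have hd : 0 < d := hb.1.trans hb.2
  have hk0 : 0 < k := by exact_mod_cast pos_of_mul_pos_left hb.1 hd.le
  have hk1 : k < 1 := by exact_mod_cast (mul_lt_iff_lt_one_left hd).1 hb.2
  omega

/-- For `B ≠ 0`, `d > 0`, `b ∈ (0,d)`, the function `z ↦ ξ_B(b,z)` is differentiable
at each `z ∉ Σ_B` with derivative
`(1/(4πd|B|)) Σ_{n≥1} ψ'((|B| − z + (πn/d)²)/(2|B|))·sin²(πnb/d)`, which is strictly
positive; consequently `ξ_B(b,·)` is strictly increasing on each connected component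
of `ℝ ∖ Σ_B`. -/
theorem xiB_hasDerivAt_and_strictMono (B d b : ℝ) (hB : B ≠ 0) (hd : 0 < d)
    (hb0 : 0 < b) (hbd : b < d) :
    (∀ z : ℝ, z ∉ landauLevels B d →
        HasDerivAt (xiB B d b)
          ((1 / (4 * π * d * |B|)) * ∑' n : ℕ,
            trigamma ((|B| - z + (π * ((n : ℝ) + 1) / d) ^ 2) / (2 * |B|)) *
              Real.sin (π * ((n : ℝ) + 1) * b / d) ^ 2) z ∧
        0 < (1 / (4 * π * d * |B|)) * ∑' n : ℕ,
            trigamma ((|B| - z + (π * ((n : ℝ) + 1) / d) ^ 2) / (2 * |B|)) *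
              Real.sin (π * ((n : ℝ) + 1) * b / d) ^ 2) ∧
    (∀ z₁ z₂ : ℝ, z₁ < z₂ → Set.Icc z₁ z₂ ⊆ (landauLevels B d)ᶜ →
        xiB B d b z₁ < xiB B d b z₂) := by
  have h := xiB_hasDerivAt_and_strictMono_general hB hd (ne_intCast_mul_of_mem_Ioo ⟨hb0, hbd⟩)
  exact ⟨h.1, fun z₁ z₂ hlt hI => h.2 _ Set.ordConnected_Icc hI (Set.left_mem_Icc.2 hlt.le)
    (Set.right_mem_Icc.2 hlt.le) hlt⟩
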